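/- Let {X_k : k ∈ ℕ^d} be a negatively associated field of uniformly bounded random variables with E[X_k] = 0 for all k ∈ ℕ^d, and set S_n = Σ_{k ≤ n} X_k. Then for any δ > 0, almost surely, limsup_{n → ∞} ( max_{k ≤ δn} |S_{n+k} − S_n| ) / (2d |n| log log |n|)^{1/2} ≤ 80 d ( δ (1 + 2δ)^d )^{1/2} sup_{k} (E[X_k²])^{1/2}. -/

import Mathlib

/-!
Negative association makes Laplace transforms submultiplicative, so for an index set `A` with at
most `N` points and `E X_k² ≤ s²` one has the Chernoff bound
`P(|∑_{i ∈ A} X_i| ≥ t) ≤ 2 exp (-l t + l² s² N)` as long as `0 ≤ l ≤ 1 / b`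
(`measureReal_abs_sum_ge_le`). No maximal inequality is needed: union bounds over two families of
increments, followed by Borel–Cantelli over the scales `2 ^ L ≤ |n| < 2 ^ (L + 1)`
(`ae_eventually_abs_sum_lt`), suffice.

* Coarse increments. The set `grid L` has `O(L²)` elements and approximates every integer up to
  `2 ^ (2 L)` from below with relative error `1 / L`. There are `O(L^(4d))` pairs of points with
  coordinates in it. If `q ≤ p` round `n` and `n + k` with `k ≤ δ n`, the set `[1, p] \ [1, q]`
  has at most `4 d W 2 ^ L` points, where `W = δ (1 + 2 δ) ^ d`, because
  `(1 + δ) ^ d - 1 ≤ d W`. The Chernoff bound at the threshold `40 d √(d W) s √(2 ^ L log L)` is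
  `2 L ^ (4 - 40 d)`, which beats the number of pairs.
* Fine increments. Replacing a point by its rounding changes the partial sum by a sum over
  `O(2 ^ L / L)` points. At half the coarse threshold the Chernoff bound is
  `exp (-c L √(log L) + O(L))`, which beats the `exp (O(L))` pairs of points in `[0, 2 ^ (2 L)]^d`.

One coarse and two fine increments make up `S_{n+k} - S_n` (`abs_increment_le`), and the total
`80 d √(d W) s √(2 ^ L log L)` is at most `80 d √W s √(2 d |n| log log |n|)` because
`log L ≤ 2 log log |n|`.
-/

open MeasureTheory Filter Finset

noncomputable section

/-- `plog x = ln (max x e)`, the truncated logarithm used in the paper. -/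
def plog (x : ℝ) : ℝ := Real.log (max x (Real.exp 1))

/-- A family of real random variables `X i`, `i ∈ S`, is *negatively associated* if for every
pair of disjoint finite subsets `A`, `B` of `S` and all coordinatewise non-decreasing functions
`f`, `g`, one has `Cov (f (X_i, i ∈ A), g (X_j, j ∈ B)) ≤ 0`, whenever the covariance exists. -/
def NegAssocOn {Ω : Type} [MeasurableSpace Ω] (μ : Measure Ω) {ι : Type}
    (X : ι → Ω → ℝ) (S : Set ι) : Prop :=
  ∀ A B : Finset ι, ↑A ⊆ S → ↑B ⊆ S → Disjoint A B →
    ∀ (f : (↥A → ℝ) → ℝ) (g : (↥B → ℝ) → ℝ), Monotone f → Monotone g →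
      Integrable (fun ω => f (fun i => X i ω)) μ →
      Integrable (fun ω => g (fun j => X j ω)) μ →
      Integrable (fun ω => f (fun i => X i ω) * g (fun j => X j ω)) μ →
      ∫ ω, f (fun i => X i ω) * g (fun j => X j ω) ∂μ ≤
        (∫ ω, f (fun i => X i ω) ∂μ) * ∫ ω, g (fun j => X j ω) ∂μ

/-! ### Exponential inequalities for negatively associated families -/

lemma NegAssocOn.neg {Ω : Type} [MeasurableSpace Ω] {μ : Measure Ω} {ι : Type}
    {X : ι → Ω → ℝ} {S : Set ι} (h : NegAssocOn μ X S) :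
    NegAssocOn μ (fun i ω => -X i ω) S := by
  intro A B hA hB hAB f g hf hg hfi hgi hfgi
  have key := h A B hA hB hAB (fun x => -f (fun i => -x i)) (fun x => -g (fun i => -x i))
    (fun x y hxy => neg_le_neg (hf (fun i => neg_le_neg (hxy i))))
    (fun x y hxy => neg_le_neg (hg (fun i => neg_le_neg (hxy i))))
    hfi.neg hgi.neg (by simpa using hfgi)
  simpa [integral_neg] using key

section Tail

variable {Ω : Type} [MeasurableSpace Ω] {μ : Measure Ω} [IsProbabilityMeasure μ]
  {ι : Type} {X : ι → Ω → ℝ} {S : Set ι} {b v : ℝ}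

lemma integrable_exp_sum (hmeas : ∀ k ∈ S, Measurable (X k))
    (hbdd : ∀ k ∈ S, ∀ᵐ ω ∂μ, |X k ω| ≤ b) {l : ℝ} (hl : 0 ≤ l)
    (A : Finset ι) (hA : ↑A ⊆ S) :
    Integrable (fun ω => Real.exp (l * ∑ i ∈ A, X i ω)) μ := by
  have hm : Measurable (fun ω => Real.exp (l * ∑ i ∈ A, X i ω)) :=
    Real.measurable_exp.comp
      ((Finset.measurable_sum A (fun i hi => hmeas i (hA hi))).const_mul l)
  refine Integrable.of_bound hm.aestronglyMeasurable (Real.exp (l * ∑ i ∈ A, b)) ?_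
  have hall : ∀ᵐ ω ∂μ, ∀ i ∈ A, |X i ω| ≤ b :=
    (ae_ball_iff A.countable_toSet).2 (fun i hi => hbdd i (hA hi))
  filter_upwards [hall] with ω hω
  rw [Real.norm_eq_abs, abs_of_pos (Real.exp_pos _)]
  exact Real.exp_le_exp.2 (mul_le_mul_of_nonneg_left
    (Finset.sum_le_sum fun i hi => (le_abs_self _).trans (hω i hi)) hl)

/-- A centred variable with `|X| ≤ b` and second moment at most `v` has Laplace transform at most
`exp (l² v)` for `0 ≤ l ≤ 1 / b`, because `exp x ≤ 1 + x + x²` on `[-1, 1]`. -/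
lemma integral_exp_le (hmeas : ∀ k ∈ S, Measurable (X k))
    (hbdd : ∀ k ∈ S, ∀ᵐ ω ∂μ, |X k ω| ≤ b) (hmean : ∀ k ∈ S, ∫ ω, X k ω ∂μ = 0)
    (hvar : ∀ k ∈ S, ∫ ω, X k ω ^ 2 ∂μ ≤ v) {l : ℝ} (hl : 0 ≤ l) (hlb : l * b ≤ 1)
    (k : ι) (hk : k ∈ S) :
    ∫ ω, Real.exp (l * X k ω) ∂μ ≤ Real.exp (l ^ 2 * v) := by
  have hX : Integrable (X k) μ :=
    Integrable.of_bound (hmeas k hk).aestronglyMeasurable b (hbdd k hk)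
  have hX2 : Integrable (fun ω => X k ω ^ 2) μ := by
    refine Integrable.of_bound ((hmeas k hk).pow_const 2).aestronglyMeasurable (b ^ 2) ?_
    filter_upwards [hbdd k hk] with ω hω
    rw [Real.norm_eq_abs, abs_pow]
    exact pow_le_pow_left₀ (abs_nonneg _) hω 2
  have hE : Integrable (fun ω => Real.exp (l * X k ω)) μ := by
    simpa using integrable_exp_sum hmeas hbdd hl {k} (by simpa using hk)
  calc ∫ ω, Real.exp (l * X k ω) ∂μ
      ≤ ∫ ω, (1 + (l * X k ω + l ^ 2 * X k ω ^ 2)) ∂μ := by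
        refine integral_mono_ae hE
          ((integrable_const 1).add ((hX.const_mul l).add (hX2.const_mul (l ^ 2)))) ?_
        filter_upwards [hbdd k hk] with ω hω
        have h1 : |l * X k ω| ≤ 1 := by
          rw [abs_mul, abs_of_nonneg hl]
          exact (mul_le_mul_of_nonneg_left hω hl).trans hlb
        have h2 := (abs_le.1 (Real.abs_exp_sub_one_sub_id_le h1)).2
        nlinarith
    _ = 1 + l ^ 2 * ∫ ω, X k ω ^ 2 ∂μ := by
        have h1 := integral_add (integrable_const (μ := μ) (1 : ℝ))
          ((hX.const_mul l).add (hX2.const_mul (l ^ 2)))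
        have h2 := integral_add (hX.const_mul l) (hX2.const_mul (l ^ 2))
        simp only [Pi.add_apply, integral_const_mul, hmean k hk] at h1 h2
        rw [h1, h2]
        simp
    _ ≤ l ^ 2 * v + 1 := by
        have := mul_le_mul_of_nonneg_left (hvar k hk) (sq_nonneg l)
        linarith
    _ ≤ Real.exp (l ^ 2 * v) := Real.add_one_le_exp _

/-- Negative association makes the Laplace transform of a sum submultiplicative, hence of
sub-Gaussian size in the range `l ≤ 1 / b`. -/
lemma integral_exp_sum_le (hNA : NegAssocOn μ X S) (hmeas : ∀ k ∈ S, Measurable (X k))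
    (hbdd : ∀ k ∈ S, ∀ᵐ ω ∂μ, |X k ω| ≤ b) (hmean : ∀ k ∈ S, ∫ ω, X k ω ∂μ = 0)
    (hvar : ∀ k ∈ S, ∫ ω, X k ω ^ 2 ∂μ ≤ v) {l : ℝ} (hl : 0 ≤ l) (hlb : l * b ≤ 1)
    (A : Finset ι) (hA : ↑A ⊆ S) :
    ∫ ω, Real.exp (l * ∑ i ∈ A, X i ω) ∂μ ≤ Real.exp (l ^ 2 * v * A.card) := by
  classical
  induction A using Finset.induction_on with
  | empty => simp
  | insert a A ha ih =>
    have haS : a ∈ S := hA (by simp)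
    have hAS : ↑A ⊆ S := fun i hi => hA (by simp; exact Or.inr hi)
    have h1 : Integrable (fun ω => Real.exp (l * X a ω)) μ := by
      simpa using integrable_exp_sum hmeas hbdd hl {a} (by simpa using haS)
    have h2 := integrable_exp_sum hmeas hbdd hl A hAS
    have hprod : ∀ ω, Real.exp (l * ∑ i ∈ insert a A, X i ω) =
        Real.exp (l * X a ω) * Real.exp (l * ∑ i ∈ A, X i ω) := by
      intro ω
      rw [Finset.sum_insert ha, mul_add, Real.exp_add]
    have h3 := integrable_exp_sum hmeas hbdd hl (insert a A) hA
    have hatt : ∀ ω, ∑ i : ↥A, X i ω = ∑ i ∈ A, X i ω := fun ω =>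
      Finset.sum_coe_sort A (fun i => X i ω)
    have key := hNA {a} A (by simpa using haS) hAS (by simpa using ha)
      (fun x => Real.exp (l * x ⟨a, by simp⟩)) (fun x => Real.exp (l * ∑ i, x i))
      (fun x y hxy => Real.exp_le_exp.2 (mul_le_mul_of_nonneg_left (hxy _) hl))
      (fun x y hxy => Real.exp_le_exp.2
        (mul_le_mul_of_nonneg_left (Finset.sum_le_sum fun i _ => hxy i) hl))
      h1 (by simpa only [hatt] using h2) (by simpa only [hatt, ← hprod] using h3)
    simp only [hatt, ← hprod] at key
    refine key.trans ((mul_le_mul (integral_exp_le hmeas hbdd hmean hvar hl hlb a haS) (ih hAS)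
      (integral_nonneg fun _ => (Real.exp_pos _).le) (Real.exp_pos _).le).trans ?_)
    rw [← Real.exp_add, Finset.card_insert_of_notMem ha]
    push_cast
    exact Real.exp_le_exp.2 (by linarith)

lemma measureReal_sum_ge_le (hNA : NegAssocOn μ X S) (hmeas : ∀ k ∈ S, Measurable (X k))
    (hbdd : ∀ k ∈ S, ∀ᵐ ω ∂μ, |X k ω| ≤ b) (hmean : ∀ k ∈ S, ∫ ω, X k ω ∂μ = 0)
    (hvar : ∀ k ∈ S, ∫ ω, X k ω ^ 2 ∂μ ≤ v) (hv : 0 ≤ v) {l : ℝ} (hl : 0 ≤ l)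
    (hlb : l * b ≤ 1) (A : Finset ι) (hA : ↑A ⊆ S) {N : ℝ} (hN : (A.card : ℝ) ≤ N) (t : ℝ) :
    μ.real {ω | t ≤ ∑ i ∈ A, X i ω} ≤ Real.exp (-(l * t) + l ^ 2 * v * N) := by
  refine (ProbabilityTheory.measure_ge_le_exp_mul_mgf t hl
    (integrable_exp_sum hmeas hbdd hl A hA)).trans ?_
  rw [Real.exp_add, neg_mul]
  refine mul_le_mul_of_nonneg_left ?_ (Real.exp_pos _).le
  refine (integral_exp_sum_le hNA hmeas hbdd hmean hvar hl hlb A hA).trans ?_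
  exact Real.exp_le_exp.2 (mul_le_mul_of_nonneg_left hN (mul_nonneg (sq_nonneg l) hv))

/-- Two-sided Chernoff bound; the lower tail comes from the negatively associated family `-X`. -/
lemma measureReal_abs_sum_ge_le (hNA : NegAssocOn μ X S) (hmeas : ∀ k ∈ S, Measurable (X k))
    (hbdd : ∀ k ∈ S, ∀ᵐ ω ∂μ, |X k ω| ≤ b) (hmean : ∀ k ∈ S, ∫ ω, X k ω ∂μ = 0)
    (hvar : ∀ k ∈ S, ∫ ω, X k ω ^ 2 ∂μ ≤ v) (hv : 0 ≤ v) {l : ℝ} (hl : 0 ≤ l)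
    (hlb : l * b ≤ 1) (A : Finset ι) (hA : ↑A ⊆ S) {N : ℝ} (hN : (A.card : ℝ) ≤ N) (t : ℝ) :
    μ.real {ω | t ≤ |∑ i ∈ A, X i ω|} ≤ 2 * Real.exp (-(l * t) + l ^ 2 * v * N) := by
  have h1 := measureReal_sum_ge_le hNA hmeas hbdd hmean hvar hv hl hlb A hA hN t
  have h2 := measureReal_sum_ge_le (b := b) (v := v) hNA.neg (fun k hk => (hmeas k hk).neg)
    (fun k hk => by simpa using hbdd k hk)
    (fun k hk => by rw [integral_neg, hmean k hk, neg_zero])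
    (fun k hk => by simpa using hvar k hk) hv hl hlb A hA hN t
  have hsub : {ω | t ≤ |∑ i ∈ A, X i ω|} ⊆
      {ω | t ≤ ∑ i ∈ A, X i ω} ∪ {ω | t ≤ ∑ i ∈ A, -X i ω} := by
    intro ω hω
    simp only [Set.mem_union, Set.mem_ofPred_eq, Finset.sum_neg_distrib] at hω ⊢
    exact le_abs.1 hω
  calc _ ≤ _ := measureReal_mono hsub
    _ ≤ _ := measureReal_union_le _ _
    _ ≤ _ := by linarith

/-- Borel–Cantelli over scales: at scale `L` finitely many index sets `A ∈ P L`, each with at most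
`N L` elements, compete against the threshold `t L`; the union of the Chernoff bounds taken at
`l L` is assumed to be at most `1 / L²`. -/
lemma ae_eventually_abs_sum_lt (hNA : NegAssocOn μ X S) (hmeas : ∀ k ∈ S, Measurable (X k))
    (hbdd : ∀ k ∈ S, ∀ᵐ ω ∂μ, |X k ω| ≤ b) (hmean : ∀ k ∈ S, ∫ ω, X k ω ∂μ = 0)
    (hvar : ∀ k ∈ S, ∫ ω, X k ω ^ 2 ∂μ ≤ v) (hv : 0 ≤ v)
    (P : ℕ → Finset (Finset ι)) (N t l : ℕ → ℝ)
    (hP : ∀ L, ∀ A ∈ P L, ↑A ⊆ S ∧ (A.card : ℝ) ≤ N L)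
    (hl : ∀ L, 0 ≤ l L) (hlb : ∀ᶠ L in atTop, l L * b ≤ 1)
    (hsum : ∀ᶠ L : ℕ in atTop, ((P L).card : ℝ) *
      (2 * Real.exp (-(l L * t L) + l L ^ 2 * v * N L)) ≤ 1 / (L : ℝ) ^ 2) :
    ∀ᵐ ω ∂μ, ∀ᶠ L in atTop, ∀ A ∈ P L, |∑ i ∈ A, X i ω| < t L := by
  obtain ⟨L₀, hL₀⟩ := eventually_atTop.1 (hlb.and hsum)
  set E : ℕ → Set Ω := fun j => ⋃ A ∈ P (j + L₀), {ω | t (j + L₀) ≤ |∑ i ∈ A, X i ω|} with hE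
  have hbound : ∀ j, μ.real (E j) ≤ 1 / ((j + L₀ : ℕ) : ℝ) ^ 2 := by
    intro j
    obtain ⟨h1, h2⟩ := hL₀ (j + L₀) (by omega)
    refine (measureReal_biUnion_finset_le _ _).trans (le_trans ?_ h2)
    rw [← nsmul_eq_mul]
    exact Finset.sum_le_card_nsmul _ _ _ fun A hA =>
      measureReal_abs_sum_ge_le hNA hmeas hbdd hmean hvar hv (hl _) h1 A (hP _ A hA).1
        (hP _ A hA).2 _
  have hs : Summable (fun j => μ.real (E j)) := by
    refine Summable.of_nonneg_of_le (fun _ => measureReal_nonneg) hbound ?_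
    exact (summable_nat_add_iff L₀).2 (Real.summable_one_div_nat_pow.2 one_lt_two)
  have hfin : ∑' j, μ (E j) ≠ ⊤ := by
    have : ∀ j, μ (E j) = ENNReal.ofReal (μ.real (E j)) := fun j =>
      (ofReal_measureReal (measure_ne_top μ _)).symm
    simp_rw [this]
    exact hs.tsum_ofReal_ne_top
  filter_upwards [ae_eventually_notMem hfin] with ω hω
  obtain ⟨J, hJ⟩ := eventually_atTop.1 hω
  refine eventually_atTop.2 ⟨J + L₀, fun L hL A hA => ?_⟩
  have := hJ (L - L₀) (by omega)
  have hLe : L - L₀ + L₀ = L := by omega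
  simp only [hE, hLe, Set.mem_iUnion, Set.mem_ofPred_eq, not_exists, not_le] at this
  exact this A hA

end Tail

/-! ### Logarithmically fine grids -/

/-- The integers `a * 2 ^ e` with `a < 4 L` and `e ≤ 2 L`. Up to `2 ^ (2 L)` they approximate every
integer from below with relative error `1 / L`, although there are only `O(L²)` of them. -/
def grid (L : ℕ) : Finset ℕ :=
  ((Finset.range (4 * L)) ×ˢ (Finset.range (2 * L + 1))).image fun x => x.1 * 2 ^ x.2

lemma card_grid_le (L : ℕ) (hL : 1 ≤ L) : (grid L).card ≤ 12 * L ^ 2 := by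
  refine Finset.card_image_le.trans ?_
  rw [Finset.card_product, Finset.card_range, Finset.card_range]
  nlinarith

lemma exists_grid (L : ℕ) (hL : 1 ≤ L) (u : ℕ) (hu : u ≤ 2 ^ (2 * L)) :
    ∃ r ∈ grid L, r ≤ u ∧ L * (u - r) ≤ u := by
  have hex : ∃ e, u / 2 ^ e < 4 * L :=
    ⟨2 * L, by
      have : u / 2 ^ (2 * L) ≤ 1 := by
        simpa using Nat.div_le_div_right (c := 2 ^ (2 * L)) hu
      omega⟩
  classical
  set e := Nat.find hex with he
  have he1 : u / 2 ^ e < 4 * L := Nat.find_spec hex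
  have he2 : e ≤ 2 * L := Nat.find_min' hex (by
      have : u / 2 ^ (2 * L) ≤ 1 := by
        simpa using Nat.div_le_div_right (c := 2 ^ (2 * L)) hu
      omega)
  refine ⟨u / 2 ^ e * 2 ^ e, ?_, Nat.div_mul_le_self _ _, ?_⟩
  · exact Finset.mem_image.2 ⟨(u / 2 ^ e, e), by simp; omega, rfl⟩
  · have hmod : u - u / 2 ^ e * 2 ^ e = u % 2 ^ e := by
      have := Nat.div_add_mod u (2 ^ e)
      rw [mul_comm] at this
      omega
    rw [hmod]
    rcases Nat.eq_zero_or_pos e with h0 | h0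
    · simp [h0, Nat.mod_one]
    · have hlt : u % 2 ^ e < 2 ^ e := Nat.mod_lt _ (by positivity)
      have hmin : ¬ u / 2 ^ (e - 1) < 4 * L := Nat.find_min hex (by omega)
      have h4 : 4 * L * 2 ^ (e - 1) ≤ u :=
        (Nat.le_div_iff_mul_le (by positivity)).1 (not_lt.1 hmin)
      have h5 : 2 ^ e = 2 * 2 ^ (e - 1) := by
        rw [← pow_succ']; congr 1; omega
      nlinarith

lemma exists_grid_pi {d : ℕ} (L : ℕ) (hL : 1 ≤ L) (u : Fin d → ℕ)
    (hu : ∀ i, u i ≤ 2 ^ (2 * L)) :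
    ∃ r : Fin d → ℕ, (∀ i, r i ∈ grid L) ∧ r ≤ u ∧ ∀ i, L * (u i - r i) ≤ u i := by
  choose r h1 h2 h3 using fun i => exists_grid L hL (u i) (hu i)
  exact ⟨r, h1, h2, h3⟩

/-! ### Box differences -/

/-- The points of `[1, p]` outside `[1, q]`; for `q ≤ p` the increment `S_p - S_q` is the sum
over this set. -/
def boxDiff {d : ℕ} (x : (Fin d → ℕ) × (Fin d → ℕ)) : Finset (Fin d → ℕ) :=
  Finset.Icc 1 x.1 \ Finset.Icc 1 x.2

lemma sum_boxDiff {d : ℕ} {p q : Fin d → ℕ} (h : q ≤ p) (f : (Fin d → ℕ) → ℝ) :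
    ∑ j ∈ boxDiff (p, q), f j = ∑ j ∈ Finset.Icc 1 p, f j - ∑ j ∈ Finset.Icc 1 q, f j := by
  rw [eq_sub_iff_add_eq]
  exact Finset.sum_sdiff (Finset.Icc_subset_Icc_right h)

lemma card_boxDiff {d : ℕ} {p q : Fin d → ℕ} (h : q ≤ p) :
    ((boxDiff (p, q)).card : ℝ) = ∏ i, (p i : ℝ) - ∏ i, (q i : ℝ) := by
  have h1 : ∀ r : Fin d → ℕ, ((Finset.Icc 1 r).card : ℝ) = ∏ i, (r i : ℝ) := by
    intro r
    rw [Pi.card_Icc]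
    simp
  have h2 := Finset.card_sdiff_add_card_eq_card
    (Finset.Icc_subset_Icc_right (a := (1 : Fin d → ℕ)) h)
  rw [← h1, ← h1, ← h2]
  simp [boxDiff]

lemma boxDiff_subset {d : ℕ} (x : (Fin d → ℕ) × (Fin d → ℕ)) :
    (↑(boxDiff x) : Set (Fin d → ℕ)) ⊆ Set.Ici 1 := by
  intro j hj
  simp only [boxDiff, Finset.coe_sdiff, Finset.coe_Icc] at hj
  exact hj.1.1

/-- Rounding every coordinate down by a relative error at most `1 / L` loses at most the
proportion `d / L` of the volume (Bernoulli's inequality). -/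
lemma prod_round_ge {d : ℕ} (L : ℕ) (hL : 1 ≤ L) (u r : Fin d → ℕ) (hr : r ≤ u)
    (h : ∀ i, L * (u i - r i) ≤ u i) :
    (1 - d / L) * ∏ i, (u i : ℝ) ≤ ∏ i, (r i : ℝ) := by
  have hL' : (1 : ℝ) ≤ L := by exact_mod_cast hL
  have hinv : 1 / (L : ℝ) ≤ 1 := by rw [div_le_one (by linarith)]; exact hL'
  have h1 : ∀ i, (1 - 1 / (L : ℝ)) * u i ≤ r i := by
    intro i
    have h2 : (L : ℝ) * ((u i : ℝ) - r i) ≤ u i := by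
      have := h i
      have h3 := hr i
      rw [← Nat.cast_sub h3]
      exact_mod_cast this
    have h4 : (u i : ℝ) - r i ≤ u i / L := by
      rw [le_div_iff₀ (by linarith)]; linarith
    have : (1 - 1 / (L : ℝ)) * u i = u i - u i / L := by ring
    linarith
  have h5 : (1 - (d : ℝ) / L) ≤ (1 - 1 / (L : ℝ)) ^ d := by
    have := one_add_mul_le_pow (a := -(1 / (L : ℝ))) (by linarith) d
    calc (1 - (d : ℝ) / L) = 1 + d * -(1 / (L : ℝ)) := by ring
      _ ≤ _ := this
      _ = _ := by ring
  calc (1 - d / L) * ∏ i, (u i : ℝ) ≤ (1 - 1 / (L : ℝ)) ^ d * ∏ i, (u i : ℝ) :=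
        mul_le_mul_of_nonneg_right h5 (Finset.prod_nonneg fun i _ => Nat.cast_nonneg _)
    _ = ∏ i, ((1 - 1 / (L : ℝ)) * u i) := by
        rw [Finset.prod_mul_distrib]; simp
    _ ≤ _ := Finset.prod_le_prod
        (fun i _ => mul_nonneg (by linarith) (Nat.cast_nonneg _)) (fun i _ => h1 i)

lemma one_add_pow_sub_one_le (δ : ℝ) (hδ : 0 < δ) (d : ℕ) :
    (1 + δ) ^ d - 1 ≤ d * (δ * (1 + 2 * δ) ^ d) := by
  have h1 : (1 + δ) ^ d - 1 ≤ d * (δ * (1 + δ) ^ d) := by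
    induction d with
    | zero => simp
    | succ d ih =>
      have h0 : 0 ≤ (1 + δ) ^ d := by positivity
      have h2 : (0 : ℝ) ≤ d := Nat.cast_nonneg _
      have h3 : 0 ≤ d * δ * (δ * (1 + δ) ^ d) := by positivity
      have h4 : 0 ≤ δ * (δ * (1 + δ) ^ d) := by positivity
      rw [pow_succ]
      push_cast
      nlinarith
  refine h1.trans ?_
  gcongr
  linarith

/-! ### Growth estimates -/

lemma tendsto_div_sqrt_two_pow :
    Tendsto (fun L : ℕ => (L : ℝ) / Real.sqrt (2 ^ L)) atTop (nhds 0) := by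
  have h := (tendsto_pow_const_div_const_pow_of_one_lt 2 (one_lt_two (α := ℝ))).sqrt
  rw [Real.sqrt_zero] at h
  refine h.congr fun L => ?_
  rw [Real.sqrt_div (by positivity), Real.sqrt_sq (Nat.cast_nonneg _)]

lemma sqrt_log_le (L : ℕ) : Real.sqrt (Real.log L) ≤ L := by
  rw [Real.sqrt_le_left (Nat.cast_nonneg _)]
  rcases Nat.eq_zero_or_pos L with rfl | h
  · simp
  · have h1 : (1 : ℝ) ≤ L := by exact_mod_cast h
    have := Real.log_le_sub_one_of_pos (by linarith : (0 : ℝ) < L)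
    nlinarith

lemma half_log_le_plog_plog {L : ℕ} (hL : 4 ≤ L) {x : ℝ} (hx : 2 ^ L ≤ x) :
    Real.log L ≤ 2 * plog (plog x) := by
  have hL' : (4 : ℝ) ≤ L := by exact_mod_cast hL
  have hx0 : 0 < x := lt_of_lt_of_le (by positivity) hx
  have h1 : Real.sqrt L ≤ plog x := by
    have h2 : Real.log ((2 : ℝ) ^ L) ≤ plog x :=
      Real.log_le_log (by positivity) (hx.trans (le_max_left _ _))
    rw [Real.log_pow] at h2
    have h3 := Real.log_two_gt_d9
    have h4 : Real.sqrt L ≤ L / 2 := by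
      rw [Real.sqrt_le_left (by linarith)]
      nlinarith
    nlinarith
  have h5 : Real.log (Real.sqrt L) ≤ plog (plog x) :=
    Real.log_le_log (Real.sqrt_pos.2 (by linarith)) (h1.trans (le_max_left _ _))
  rw [Real.log_sqrt (by linarith)] at h5
  linarith

/-- Summability for the coarse increments: `O(L^(4d))` of them against a tail `L^(-36d)`. -/
lemma coarse_bound (d : ℕ) (hd : 1 ≤ d) (L : ℕ) (hL : 12 ≤ L) :
    (((12 * L ^ 2) ^ d * (12 * L ^ 2) ^ d : ℕ) : ℝ) * (2 * Real.exp (-(36 * d * Real.log L))) ≤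
      1 / (L : ℝ) ^ 2 := by
  have hL' : (12 : ℝ) ≤ L := by exact_mod_cast hL
  have hL0 : (0 : ℝ) < L := by linarith
  have h1 : Real.exp (-(36 * d * Real.log L)) = 1 / (L : ℝ) ^ (36 * d) := by
    rw [Real.exp_neg, ← Real.rpow_natCast, Real.rpow_def_of_pos hL0, one_div]
    push_cast
    congr 2
    ring
  rw [h1, mul_one_div, mul_div_assoc', div_le_div_iff₀ (by positivity) (by positivity)]
  push_cast
  have h2 : ((12 : ℝ) * L ^ 2) ^ d ≤ ((L : ℝ) ^ 3) ^ d := by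
    refine pow_le_pow_left₀ (by positivity) ?_ d
    nlinarith [sq_nonneg (L : ℝ)]
  calc ((12 : ℝ) * L ^ 2) ^ d * (12 * L ^ 2) ^ d * 2 * L ^ 2
      ≤ ((L : ℝ) ^ 3) ^ d * ((L : ℝ) ^ 3) ^ d * L * L ^ 2 := by
        gcongr; linarith
    _ = (L : ℝ) ^ (6 * d + 3) := by ring
    _ ≤ (L : ℝ) ^ (36 * d) := pow_le_pow_right₀ (by linarith) (by omega)
    _ = _ := by ring

/-- Summability for the fine increments: `exp (O(L))` of them against a tail
`exp (-ε L √(log L))`. -/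
lemma fine_bound (d : ℕ) (ε a : ℝ) (hε : 0 < ε) :
    ∀ᶠ L : ℕ in atTop,
      (((2 ^ (2 * L) + 1) ^ d * (2 ^ (2 * L) + 1) ^ d : ℕ) : ℝ) *
        (2 * Real.exp (-(ε * L * Real.sqrt (Real.log L)) + a * L)) ≤ 1 / (L : ℝ) ^ 2 := by
  have ht : Tendsto (fun L : ℕ => Real.sqrt (Real.log L)) atTop atTop :=
    Real.tendsto_sqrt_atTop.comp (Real.tendsto_log_atTop.comp tendsto_natCast_atTop_atTop)
  filter_upwards [ht.eventually_ge_atTop ((a + 6 * d + 3) / ε), eventually_ge_atTop 1]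
    with L h1 hL
  have hL' : (1 : ℝ) ≤ L := by exact_mod_cast hL
  have hexp : (L : ℝ) ≤ Real.exp L := by linarith [Real.add_one_le_exp (L : ℝ)]
  have h2e : (2 : ℝ) ≤ Real.exp L := by linarith [Real.add_one_le_exp (L : ℝ)]
  have h2e1 : (2 : ℝ) ≤ Real.exp 1 := by linarith [Real.add_one_le_exp (1 : ℝ)]
  rw [div_le_iff₀ hε] at h1
  have h3 : -(ε * L * Real.sqrt (Real.log L)) + a * L ≤ -(6 * d + 3) * L := by nlinarith
  have h4 : (((2 ^ (2 * L) + 1) : ℕ) : ℝ) ≤ Real.exp (3 * L) := by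
    have : ((2 ^ (2 * L) + 1 : ℕ) : ℝ) ≤ 2 ^ (3 * L) := by
      have h5 : 2 ^ (2 * L) + 1 ≤ 2 ^ (3 * L) := by
        calc 2 ^ (2 * L) + 1 ≤ 2 ^ (2 * L) + 2 ^ (2 * L) :=
              Nat.add_le_add_left Nat.one_le_two_pow _
          _ = 2 ^ (2 * L + 1) := by ring
          _ ≤ _ := Nat.pow_le_pow_right (by norm_num) (by omega)
      exact_mod_cast h5
    refine this.trans ((pow_le_pow_left₀ (by norm_num) h2e1 _).trans (le_of_eq ?_))
    rw [← Real.exp_nat_mul]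
    push_cast
    ring_nf
  rw [le_div_iff₀ (by positivity)]
  calc _ ≤ (Real.exp (3 * L) ^ d * Real.exp (3 * L) ^ d) *
        (Real.exp L * Real.exp (-(6 * d + 3) * L)) * Real.exp L ^ 2 := by
        rw [Nat.cast_mul, Nat.cast_pow]
        gcongr
    _ = Real.exp ((d * (3 * L) + d * (3 * L)) + (L + -(6 * d + 3) * L) + 2 * L) := by
        simp only [Real.exp_add, ← Real.exp_nat_mul]
        push_cast
        ring
    _ = 1 := by
        rw [Real.exp_eq_one_iff]; ring
    _ ≤ 1 := le_rfl

/-! ### Rounding increments to the grid -/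

/-- If all increments between grid points, and all increments over boxes thinner by the factor
`1 / L`, are controlled, then so is `S_{n+k} - S_n`: replace `n` and `n + k` by grid points below
them. -/
lemma abs_increment_le {d : ℕ} (δ : ℝ) (hδ : 0 < δ) (f : (Fin d → ℕ) → ℝ) (L : ℕ) (hL : 1 ≤ L)
    (hLδ : 2 * (1 + δ) ≤ 2 ^ L) (hLW : 1 ≤ L * (δ * (1 + 2 * δ) ^ d)) (tc tf : ℝ)
    (hc : ∀ p q : Fin d → ℕ, (∀ i, p i ∈ grid L) → (∀ i, q i ∈ grid L) → q ≤ p →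
      ((boxDiff (p, q)).card : ℝ) ≤ 4 * d * (δ * (1 + 2 * δ) ^ d) * 2 ^ L →
      |∑ j ∈ boxDiff (p, q), f j| ≤ tc)
    (hf : ∀ p q : Fin d → ℕ, (∀ i, p i ≤ 2 ^ (2 * L)) → (∀ i, q i ≤ 2 ^ (2 * L)) → q ≤ p →
      ((boxDiff (p, q)).card : ℝ) ≤ 2 * d * (1 + δ) ^ d * 2 ^ L / L →
      |∑ j ∈ boxDiff (p, q), f j| ≤ tf)
    (n k : Fin d → ℕ) (hn : 1 ≤ n) (hnL : (∏ i, (n i : ℝ)) ≤ 2 * 2 ^ L)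
    (hk : ∀ i, k i ≤ ⌊δ * (n i : ℝ)⌋₊) :
    |∑ j ∈ Finset.Icc 1 (n + k), f j - ∑ j ∈ Finset.Icc 1 n, f j| ≤ tc + 2 * tf := by
  set W := δ * (1 + 2 * δ) ^ d with hW
  have hL0 : (0 : ℝ) < L := by exact_mod_cast hL
  have hnu : n ≤ n + k := le_add_of_nonneg_right (by intro i; exact Nat.zero_le _)
  have hui : ∀ i, ((n + k) i : ℝ) ≤ (1 + δ) * n i := by
    intro i
    have h1 : (k i : ℝ) ≤ δ * n i :=
      (Nat.cast_le.2 (hk i)).trans (Nat.floor_le (by positivity))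
    rw [Pi.add_apply]
    push_cast
    linarith
  have hni : ∀ i, (n i : ℝ) ≤ 2 * 2 ^ L := by
    intro i
    refine le_trans ?_ hnL
    have : n i ≤ ∏ j, n j :=
      Finset.single_le_prod' (f := n) (fun j _ => hn j) (Finset.mem_univ i)
    exact_mod_cast this
  have hu2 : ∀ i, (n + k) i ≤ 2 ^ (2 * L) := by
    intro i
    have : ((n + k) i : ℝ) ≤ 2 ^ (2 * L) := by
      calc ((n + k) i : ℝ) ≤ (1 + δ) * n i := hui i
        _ ≤ (1 + δ) * (2 * 2 ^ L) := by gcongr; exact hni i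
        _ = (2 * (1 + δ)) * 2 ^ L := by ring
        _ ≤ 2 ^ L * 2 ^ L := by gcongr
        _ = 2 ^ (2 * L) := by ring
    exact_mod_cast this
  have hn2 : ∀ i, n i ≤ 2 ^ (2 * L) := fun i => (hnu i).trans (hu2 i)
  obtain ⟨q, hqg, hqn, hqL⟩ := exists_grid_pi L hL n hn2
  obtain ⟨p', hpg', hpu', hpL'⟩ := exists_grid_pi L hL (n + k) hu2
  -- The two roundings need not be ordered; the join with `q` restores `q ≤ p`.
  obtain ⟨p, hp⟩ : ∃ p : Fin d → ℕ, p = p' ⊔ q := ⟨_, rfl⟩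
  have hpi : ∀ i, p i = max (p' i) (q i) := fun i => by rw [hp]; rfl
  have hqp : q ≤ p := hp ▸ le_sup_right
  have hpu : p ≤ n + k := hp ▸ sup_le hpu' (hqn.trans hnu)
  have hpg : ∀ i, p i ∈ grid L := by
    intro i
    rw [hpi]
    rcases max_choice (p' i) (q i) with h | h <;> rw [h]
    exacts [hpg' i, hqg i]
  have hpL : ∀ i, L * ((n + k) i - p i) ≤ (n + k) i := fun i =>
    (Nat.mul_le_mul_left _ (Nat.sub_le_sub_left (by rw [hpi]; exact le_max_left _ _) _)).trans
      (hpL' i)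
  have hN0 : 0 ≤ ∏ i, (n i : ℝ) := Finset.prod_nonneg fun i _ => Nat.cast_nonneg _
  have hU : ∏ i, ((n + k) i : ℝ) ≤ (1 + δ) ^ d * ∏ i, (n i : ℝ) := by
    calc ∏ i, ((n + k) i : ℝ) ≤ ∏ i, ((1 + δ) * (n i : ℝ)) :=
          Finset.prod_le_prod (fun i _ => Nat.cast_nonneg _) (fun i _ => hui i)
      _ = _ := by rw [Finset.prod_mul_distrib]; simp
  have h1δ : 1 ≤ (1 + δ) ^ d := one_le_pow₀ (by linarith)
  have hU' : ∏ i, ((n + k) i : ℝ) ≤ 2 * (1 + δ) ^ d * 2 ^ L :=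
    hU.trans (by nlinarith [mul_le_mul_of_nonneg_left hnL (by linarith : 0 ≤ (1 + δ) ^ d)])
  have hN' : ∏ i, (n i : ℝ) ≤ 2 * (1 + δ) ^ d * 2 ^ L :=
    hnL.trans (by
      have : (0 : ℝ) < 2 ^ L := by positivity
      nlinarith)
  have hq := prod_round_ge L hL n q hqn hqL
  have hpp := prod_round_ge L hL (n + k) p hpu hpL
  have hdL : (0 : ℝ) ≤ d / L := by positivity
  have e1 : |∑ j ∈ Finset.Icc 1 n, f j - ∑ j ∈ Finset.Icc 1 q, f j| ≤ tf := by
    rw [← sum_boxDiff hqn]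
    refine hf n q hn2 (fun i => (hqn i).trans (hn2 i)) hqn ?_
    rw [card_boxDiff hqn]
    calc _ ≤ d / L * ∏ i, (n i : ℝ) := by linarith
      _ ≤ d / L * (2 * (1 + δ) ^ d * 2 ^ L) := by gcongr
      _ = _ := by ring
  have e2 : |∑ j ∈ Finset.Icc 1 (n + k), f j - ∑ j ∈ Finset.Icc 1 p, f j| ≤ tf := by
    rw [← sum_boxDiff hpu]
    refine hf (n + k) p hu2 (fun i => (hpu i).trans (hu2 i)) hpu ?_
    rw [card_boxDiff hpu]
    calc _ ≤ d / L * ∏ i, ((n + k) i : ℝ) := by linarith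
      _ ≤ d / L * (2 * (1 + δ) ^ d * 2 ^ L) := by gcongr
      _ = _ := by ring
  have e3 : |∑ j ∈ Finset.Icc 1 p, f j - ∑ j ∈ Finset.Icc 1 q, f j| ≤ tc := by
    rw [← sum_boxDiff hqp]
    refine hc p q hpg hqg hqp ?_
    rw [card_boxDiff hqp]
    have h3 : ∏ i, (p i : ℝ) ≤ ∏ i, ((n + k) i : ℝ) :=
      Finset.prod_le_prod (fun i _ => Nat.cast_nonneg _) (fun i _ => Nat.cast_le.2 (hpu i))
    have h4 := one_add_pow_sub_one_le δ hδ d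
    have h5 : (d : ℝ) / L ≤ d * W := by
      rw [div_le_iff₀ hL0]
      nlinarith [Nat.cast_nonneg (α := ℝ) d]
    calc _ ≤ ((1 + δ) ^ d - 1 + d / L) * ∏ i, (n i : ℝ) := by linarith
      _ ≤ (d * W + d * W) * (2 * 2 ^ L) := by
        refine mul_le_mul (by linarith) hnL hN0 (by positivity)
      _ = _ := by ring
  rw [abs_le] at *
  constructor <;> linarith [e1.1, e1.2, e2.1, e2.2, e3.1, e3.2]

lemma tendsto_log_prod (d : ℕ) (hd : 1 ≤ d) :
    Tendsto (fun n : Fin d → ℕ => Nat.log 2 (∏ i, n i)) atTop atTop := by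
  refine tendsto_atTop.2 fun B => ?_
  filter_upwards [eventually_ge_atTop (fun _ : Fin d => 2 ^ B)] with n hn
  refine Nat.le_log_of_pow_le (by norm_num) ?_
  calc 2 ^ B ≤ (2 ^ B) ^ d := Nat.le_self_pow (by omega) _
    _ = ∏ _i : Fin d, 2 ^ B := by simp
    _ ≤ _ := Finset.prod_le_prod' fun i _ => hn i

/-! ### The almost sure bound -/

/-- The increment bound, eventually in `n`, for any positive upper bound `s` of the standard
deviations. At scale `L`, i.e. `2 ^ L ≤ |n| < 2 ^ (L + 1)`, the coarse threshold is
`τ √(2 ^ L log L)` with `τ = 40 d √(d W) s` and `W = δ (1 + 2 δ) ^ d`, the fine one is half of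
it. -/
lemma ae_eventually_increment_le
    {Ω : Type} [MeasurableSpace Ω] (μ : Measure Ω) [IsProbabilityMeasure μ]
    (d : ℕ) (hd : 1 ≤ d) (X : (Fin d → ℕ) → Ω → ℝ)
    (hmeas : ∀ k : Fin d → ℕ, 1 ≤ k → Measurable (X k))
    (hNA : NegAssocOn μ X (Set.Ici 1))
    (hmean : ∀ k : Fin d → ℕ, 1 ≤ k → ∫ ω, X k ω ∂μ = 0)
    (b : ℝ) (hbdd : ∀ k : Fin d → ℕ, 1 ≤ k → ∀ᵐ ω ∂μ, |X k ω| ≤ b)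
    (δ : ℝ) (hδ : 0 < δ) (s : ℝ) (hs : 0 < s)
    (hvar : ∀ k : Fin d → ℕ, 1 ≤ k → ∫ ω, X k ω ^ 2 ∂μ ≤ s ^ 2) :
    ∀ᵐ ω ∂μ, ∀ᶠ n : Fin d → ℕ in atTop,
      ∀ k ∈ Finset.Icc (1 : Fin d → ℕ) (fun i => ⌊δ * (n i : ℝ)⌋₊),
        |(∑ j ∈ Finset.Icc (1 : Fin d → ℕ) (n + k), X j ω)
                - ∑ j ∈ Finset.Icc (1 : Fin d → ℕ) n, X j ω| ≤
          80 * d * Real.sqrt (δ * (1 + 2 * δ) ^ d) * s *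
            Real.sqrt (2 * d * (∏ i, (n i : ℝ)) * plog (plog (∏ i, (n i : ℝ)))) := by
  classical
  obtain ⟨W, hW⟩ : ∃ W, W = δ * (1 + 2 * δ) ^ d := ⟨_, rfl⟩
  have hW0 : 0 < W := by rw [hW]; positivity
  have hd1 : (1 : ℝ) ≤ d := by exact_mod_cast hd
  have hd0 : (0 : ℝ) < d := by linarith
  obtain ⟨σ, hσ⟩ : ∃ σ, σ = s * Real.sqrt (d * W) := ⟨_, rfl⟩
  have hσ0 : 0 < σ := by rw [hσ]; positivity
  have hσ2 : σ ^ 2 = s ^ 2 * (d * W) := by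
    rw [hσ, mul_pow, Real.sq_sqrt (by positivity)]
  obtain ⟨C, hC⟩ : ∃ C, C = 2 * d * (1 + δ) ^ d := ⟨_, rfl⟩
  obtain ⟨R, hR⟩ : ∃ R : ℕ → ℝ, R = fun L => Real.sqrt (2 ^ L) := ⟨_, rfl⟩
  obtain ⟨ℓ, hℓ⟩ : ∃ ℓ : ℕ → ℝ, ℓ = fun L : ℕ => Real.sqrt (Real.log L) := ⟨_, rfl⟩
  have hR0 : ∀ L, 0 < R L := fun L => by rw [hR]; positivity
  have hR2 : ∀ L, R L ^ 2 = 2 ^ L := fun L => by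
    rw [hR]; exact Real.sq_sqrt (by positivity)
  have hℓ0 : ∀ L, 0 ≤ ℓ L := fun L => by rw [hℓ]; exact Real.sqrt_nonneg _
  have hℓ2 : ∀ L, ℓ L ^ 2 = Real.log L := fun L => by
    rw [hℓ]; exact Real.sq_sqrt (Real.log_natCast_nonneg L)
  have hℓL : ∀ L, ℓ L ≤ L := fun L => by rw [hℓ]; exact sqrt_log_le L
  have hb0 : 0 ≤ b := by
    obtain ⟨ω, hω⟩ := (hbdd 1 le_rfl).exists
    exact (abs_nonneg _).trans hω
  have hsmall : ∀ c : ℝ, ∀ᶠ L : ℕ in atTop, c * ((L : ℝ) / R L) ≤ 1 := by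
    intro c
    have h := tendsto_div_sqrt_two_pow.const_mul c
    rw [mul_zero] at h
    rw [hR]
    exact h.eventually_le_const one_pos
  -- Increments between grid points.
  have hcoarse := ae_eventually_abs_sum_lt (v := s ^ 2) hNA hmeas hbdd hmean hvar (sq_nonneg s)
    (fun L => (((Fintype.piFinset fun _ : Fin d => grid L) ×ˢ
      (Fintype.piFinset fun _ : Fin d => grid L)).filter
        fun x => ((boxDiff x).card : ℝ) ≤ 4 * d * W * 2 ^ L).image boxDiff)
    (fun L => 4 * d * W * 2 ^ L) (fun L => 40 * d * σ * (R L * ℓ L))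
    (fun L => σ⁻¹ * (ℓ L / R L))
    (by
      intro L A hA
      obtain ⟨x, hx, rfl⟩ := Finset.mem_image.1 hA
      exact ⟨boxDiff_subset x, (Finset.mem_filter.1 hx).2⟩)
    (fun L => mul_nonneg (inv_nonneg.2 hσ0.le) (div_nonneg (hℓ0 L) (hR0 L).le))
    (by
      filter_upwards [hsmall (σ⁻¹ * b)] with L hL
      refine le_trans ?_ hL
      calc σ⁻¹ * (ℓ L / R L) * b = σ⁻¹ * b * (ℓ L / R L) := by ring
        _ ≤ _ := mul_le_mul_of_nonneg_left
          (div_le_div_of_nonneg_right (hℓL L) (hR0 L).le) (by positivity))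
    (by
      filter_upwards [eventually_ge_atTop 12] with L hL
      refine le_trans ?_ (coarse_bound d hd L hL)
      have hcard : ((((Fintype.piFinset fun _ : Fin d => grid L) ×ˢ
          (Fintype.piFinset fun _ : Fin d => grid L)).filter
          fun x => ((boxDiff x).card : ℝ) ≤ 4 * d * W * 2 ^ L).image boxDiff).card ≤
          (12 * L ^ 2) ^ d * (12 * L ^ 2) ^ d := by
        refine Finset.card_image_le.trans ((Finset.card_filter_le _ _).trans ?_)
        rw [Finset.card_product, Fintype.card_piFinset_const]
        have := Nat.pow_le_pow_left (card_grid_le L (by omega)) d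
        exact Nat.mul_le_mul this this
      refine mul_le_mul (Nat.cast_le.2 hcard) ?_ (by positivity) (Nat.cast_nonneg _)
      refine mul_le_mul_of_nonneg_left (Real.exp_le_exp.2 ?_) (by norm_num)
      have hlog := Real.log_natCast_nonneg L
      have e1 : σ⁻¹ * (ℓ L / R L) * (40 * d * σ * (R L * ℓ L)) = 40 * d * Real.log L := by
        rw [← hℓ2]
        have := (hR0 L).ne'
        field_simp
      have e2 : (σ⁻¹ * (ℓ L / R L)) ^ 2 * s ^ 2 * (4 * d * W * 2 ^ L) = 4 * Real.log L := by
        rw [← hℓ2, ← hR2]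
        have h1 := (hR0 L).ne'
        have h2 : s ^ 2 * (4 * d * W * R L ^ 2) = 4 * σ ^ 2 * R L ^ 2 := by rw [hσ2]; ring
        rw [mul_assoc, h2]
        field_simp
      rw [e1, e2]
      nlinarith)
  -- Thin increments between arbitrary points.
  have hfine := ae_eventually_abs_sum_lt (v := s ^ 2) hNA hmeas hbdd hmean hvar (sq_nonneg s)
    (fun L => (((Fintype.piFinset fun _ : Fin d => Finset.range (2 ^ (2 * L) + 1)) ×ˢ
      (Fintype.piFinset fun _ : Fin d => Finset.range (2 ^ (2 * L) + 1))).filter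
        fun x => ((boxDiff x).card : ℝ) ≤ C * 2 ^ L / L).image boxDiff)
    (fun L => C * 2 ^ L / L) (fun L => 20 * d * σ * (R L * ℓ L))
    (fun L => L / R L)
    (by
      intro L A hA
      obtain ⟨x, hx, rfl⟩ := Finset.mem_image.1 hA
      exact ⟨boxDiff_subset x, (Finset.mem_filter.1 hx).2⟩)
    (fun L => div_nonneg (Nat.cast_nonneg _) (hR0 L).le)
    (by
      filter_upwards [hsmall b] with L hL
      linarith)
    (by
      filter_upwards [fine_bound d (20 * d * σ) (s ^ 2 * C) (by positivity),
        eventually_ge_atTop 1] with L hL hL1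
      refine le_trans ?_ hL
      have hcard : ((((Fintype.piFinset fun _ : Fin d => Finset.range (2 ^ (2 * L) + 1)) ×ˢ
          (Fintype.piFinset fun _ : Fin d => Finset.range (2 ^ (2 * L) + 1))).filter
          fun x => ((boxDiff x).card : ℝ) ≤ C * 2 ^ L / L).image boxDiff).card ≤
          (2 ^ (2 * L) + 1) ^ d * (2 ^ (2 * L) + 1) ^ d := by
        refine Finset.card_image_le.trans ((Finset.card_filter_le _ _).trans ?_)
        rw [Finset.card_product, Fintype.card_piFinset_const, Finset.card_range]
      refine mul_le_mul (Nat.cast_le.2 hcard) ?_ (by positivity) (Nat.cast_nonneg _)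
      refine mul_le_mul_of_nonneg_left (Real.exp_le_exp.2 (le_of_eq ?_)) (by norm_num)
      have h1 := (hR0 L).ne'
      have h2 : (L : ℝ) ≠ 0 := by
        have : L ≠ 0 := by omega
        exact_mod_cast this
      have h3 : Real.sqrt (Real.log L) = ℓ L := by rw [hℓ]
      rw [h3, ← hR2]
      field_simp)
  filter_upwards [hcoarse, hfine] with ω h1 h2
  have hev : ∀ᶠ L : ℕ in atTop, 2 * (1 + δ) ≤ (2 : ℝ) ^ L :=
    (tendsto_pow_atTop_atTop_of_one_lt one_lt_two).eventually_ge_atTop _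
  have hev2 : ∀ᶠ L : ℕ in atTop, 1 ≤ (L : ℝ) * W := by
    filter_upwards [tendsto_natCast_atTop_atTop.eventually_ge_atTop W⁻¹] with L hL
    calc 1 = W⁻¹ * W := by field_simp
      _ ≤ _ := by gcongr
  have hall := (tendsto_log_prod d hd).eventually
    (h1.and (h2.and (hev.and (hev2.and (eventually_ge_atTop 4)))))
  filter_upwards [hall, eventually_ge_atTop (1 : Fin d → ℕ)] with n hL hn k hk
  obtain ⟨L, hLdef⟩ : ∃ L, L = Nat.log 2 (∏ i, n i) := ⟨_, rfl⟩
  rw [← hLdef] at hL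
  obtain ⟨hc, hf, hLδ, hLW, hL4⟩ := hL
  have hprod : (∏ i, n i) ≠ 0 := Finset.prod_ne_zero_iff.2 fun i _ => by
    have : 1 ≤ n i := hn i
    omega
  have hlow : (2 : ℝ) ^ L ≤ ∏ i, (n i : ℝ) := by
    have := Nat.pow_log_le_self 2 hprod
    rw [← hLdef] at this
    exact_mod_cast this
  have hup : ∏ i, (n i : ℝ) ≤ 2 * 2 ^ L := by
    have := (Nat.lt_pow_succ_log_self (b := 2) (by norm_num) (∏ i, n i)).le
    rw [← hLdef, Nat.succ_eq_add_one, pow_succ'] at this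
    exact_mod_cast this
  rw [hW] at hLW
  have main := abs_increment_le δ hδ (fun j => X j ω) L (by omega) hLδ hLW
    (40 * d * σ * (R L * ℓ L)) (20 * d * σ * (R L * ℓ L))
    (by
      intro p q hp hq _ hcd
      refine (hc _ (Finset.mem_image.2 ⟨(p, q), Finset.mem_filter.2 ⟨?_, ?_⟩, rfl⟩)).le
      · exact Finset.mem_product.2 ⟨Fintype.mem_piFinset.2 hp, Fintype.mem_piFinset.2 hq⟩
      · rw [hW]; exact hcd)
    (by
      intro p q hp hq _ hcd
      refine (hf _ (Finset.mem_image.2 ⟨(p, q), Finset.mem_filter.2 ⟨?_, ?_⟩, rfl⟩)).le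
      · exact Finset.mem_product.2
          ⟨Fintype.mem_piFinset.2 fun i => Finset.mem_range.2 (Nat.lt_succ_of_le (hp i)),
            Fintype.mem_piFinset.2 fun i => Finset.mem_range.2 (Nat.lt_succ_of_le (hq i))⟩
      · rw [hC]; exact hcd)
    n k hn hup (fun i => (Finset.mem_Icc.1 hk).2 i)
  refine main.trans ?_
  rw [← hW]
  have hsq : Real.sqrt d * (R L * ℓ L) ≤
      Real.sqrt (2 * d * (∏ i, (n i : ℝ)) * plog (plog (∏ i, (n i : ℝ)))) := by
    refine Real.le_sqrt_of_sq_le ?_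
    rw [mul_pow, mul_pow, Real.sq_sqrt hd0.le, hR2, hℓ2]
    have h5 := half_log_le_plog_plog hL4 hlow
    have h6 := Real.log_natCast_nonneg L
    calc (d : ℝ) * (2 ^ L * Real.log L) ≤
        d * ((∏ i, (n i : ℝ)) * (2 * plog (plog (∏ i, (n i : ℝ))))) := by
          gcongr
      _ = _ := by ring
  calc 40 * d * σ * (R L * ℓ L) + 2 * (20 * d * σ * (R L * ℓ L))
      = 80 * d * Real.sqrt W * s * (Real.sqrt d * (R L * ℓ L)) := by
        rw [hσ, Real.sqrt_mul hd0.le]; ring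
    _ ≤ _ := by gcongr

/-- **Increment bound for partial sums of a bounded negatively associated field**
(Lemma 3.2). If `{X_k : k ∈ ℕ^d}` is a negatively associated field of uniformly bounded,
mean-zero random variables, then for any `δ > 0`, a.s.
`limsup_{n → ∞} max_{k ≤ δ n} |S_{n+k} − S_n| / √(2 d |n| log log |n|)
  ≤ 80 d (δ (1+2δ)^d)^{1/2} sup_k (E X_k²)^{1/2}`. -/
theorem lil_increment_bound_na_field
    {Ω : Type} [MeasurableSpace Ω] (μ : Measure Ω) [IsProbabilityMeasure μ]
    (d : ℕ) (hd : 1 ≤ d)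
    (X : (Fin d → ℕ) → Ω → ℝ)
    (hmeas : ∀ k : Fin d → ℕ, 1 ≤ k → Measurable (X k))
    (hNA : NegAssocOn μ X (Set.Ici 1))
    (hmean : ∀ k : Fin d → ℕ, 1 ≤ k → ∫ ω, X k ω ∂μ = 0)
    (b : ℝ) (hbdd : ∀ k : Fin d → ℕ, 1 ≤ k → ∀ᵐ ω ∂μ, |X k ω| ≤ b)
    (δ : ℝ) (hδ : 0 < δ) :
    ∀ᵐ ω ∂μ,
      Filter.limsup (fun n : Fin d → ℕ =>
          (((⨆ k ∈ Finset.Icc (1 : Fin d → ℕ) (fun i => ⌊δ * (n i : ℝ)⌋₊),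
              |(∑ j ∈ Finset.Icc (1 : Fin d → ℕ) (n + k), X j ω)
                - ∑ j ∈ Finset.Icc (1 : Fin d → ℕ) n, X j ω|) /
            Real.sqrt (2 * d * (∏ i, (n i : ℝ)) *
              plog (plog (∏ i, (n i : ℝ))))) : EReal))
        Filter.atTop ≤
      ((80 * d * Real.sqrt (δ * (1 + 2 * δ) ^ d) *
        ⨆ k : {k : Fin d → ℕ // 1 ≤ k}, Real.sqrt (∫ ω', (X k.1 ω') ^ 2 ∂μ) : ℝ) : EReal) := by
  classical
  set K : ℝ := 80 * d * Real.sqrt (δ * (1 + 2 * δ) ^ d) with hK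
  have hK0 : 0 ≤ K := by positivity
  set σ : ℝ := ⨆ k : {k : Fin d → ℕ // 1 ≤ k}, Real.sqrt (∫ ω', (X k.1 ω') ^ 2 ∂μ) with hσ
  have hb0 : 0 ≤ b := by
    obtain ⟨ω, hω⟩ := (hbdd 1 le_rfl).exists
    exact (abs_nonneg _).trans hω
  have hsq : ∀ k : {k : Fin d → ℕ // 1 ≤ k}, Real.sqrt (∫ ω', (X k.1 ω') ^ 2 ∂μ) ≤ b := by
    intro k
    rw [Real.sqrt_le_left hb0]
    have hle : ∀ᵐ ω ∂μ, X k.1 ω ^ 2 ≤ b ^ 2 := by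
      filter_upwards [hbdd k.1 k.2] with ω hω
      exact sq_le_sq' (abs_le.1 hω).1 (abs_le.1 hω).2
    calc ∫ ω', (X k.1 ω') ^ 2 ∂μ ≤ ∫ _ω', b ^ 2 ∂μ :=
          integral_mono_of_nonneg (ae_of_all _ fun _ => sq_nonneg _) (integrable_const _) hle
      _ = b ^ 2 := by simp
  have hbddA : BddAbove (Set.range fun k : {k : Fin d → ℕ // 1 ≤ k} =>
      Real.sqrt (∫ ω', (X k.1 ω') ^ 2 ∂μ)) := ⟨b, by rintro _ ⟨k, rfl⟩; exact hsq k⟩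
  have hσ0 : 0 ≤ σ := Real.iSup_nonneg fun _ => Real.sqrt_nonneg _
  have hvar : ∀ k : Fin d → ℕ, 1 ≤ k → ∫ ω, X k ω ^ 2 ∂μ ≤ σ ^ 2 := by
    intro k hk
    have h1 : Real.sqrt (∫ ω, X k ω ^ 2 ∂μ) ≤ σ := le_ciSup hbddA ⟨k, hk⟩
    exact (Real.sqrt_le_left hσ0).1 h1
  -- `σ` may vanish, so the bound is used with `σ + 1 / (m + 1)` and `m → ∞`.
  have hae : ∀ᵐ ω ∂μ, ∀ m : ℕ, ∀ᶠ n : Fin d → ℕ in atTop,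
      ∀ k ∈ Finset.Icc (1 : Fin d → ℕ) (fun i => ⌊δ * (n i : ℝ)⌋₊),
        |(∑ j ∈ Finset.Icc (1 : Fin d → ℕ) (n + k), X j ω)
                - ∑ j ∈ Finset.Icc (1 : Fin d → ℕ) n, X j ω| ≤
          K * (σ + 1 / ((m : ℝ) + 1)) *
            Real.sqrt (2 * d * (∏ i, (n i : ℝ)) * plog (plog (∏ i, (n i : ℝ)))) := by
    refine ae_all_iff.2 fun m => ?_
    have hm : 0 < 1 / ((m : ℝ) + 1) := Nat.one_div_pos_of_nat
    refine ae_eventually_increment_le μ d hd X hmeas hNA hmean b hbdd δ hδ _ (by positivity)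
      fun k hk => (hvar k hk).trans ?_
    gcongr
    linarith
  filter_upwards [hae] with ω hω
  have hlim : Tendsto (fun m : ℕ => ((K * (σ + 1 / ((m : ℝ) + 1)) : ℝ) : EReal)) atTop
      (nhds ((K * σ : ℝ) : EReal)) := by
    refine (continuous_coe_real_ereal.tendsto _).comp ?_
    simpa using (tendsto_one_div_add_atTop_nhds_zero_nat.const_add σ).const_mul K
  refine ge_of_tendsto' hlim fun m => Filter.limsup_le_of_le (h := ?_)
  filter_upwards [hω m] with n hn
  have hm : 0 < 1 / ((m : ℝ) + 1) := Nat.one_div_pos_of_nat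
  rw [← EReal.coe_div, EReal.coe_le_coe_iff]
  have hKσ : 0 ≤ K * (σ + 1 / ((m : ℝ) + 1)) := by positivity
  refine div_le_of_le_mul₀ (Real.sqrt_nonneg _) hKσ ?_
  have h0 := mul_nonneg hKσ (Real.sqrt_nonneg
    (2 * d * (∏ i, (n i : ℝ)) * plog (plog (∏ i, (n i : ℝ)))))
  exact Real.iSup_le (fun k => Real.iSup_le (fun hk => hn k hk) h0) h0
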